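/- Let A be a unital C*-algebra, (X, ‖·‖_X) a quasi-normed A-bimodule with modulus of concavity C ≥ 1, δ : A → X a derivation, and J := {x ∈ A : the linear map u ↦ δ(xu) from A to X is bounded}. Then the quotient vector space A/J is finite-dimensional over ℂ. -/

import Mathlib

open MulOpposite

/-!
Suppose `y 0, y 1, …` in `A` satisfy `y i * y j = 0` for `i ≠ j`. A gliding hump argument gives
some `(y n)²` in `J`: otherwise a series `c = ∑ y n * u n` can be chosen such that
`y n * c = (y n)² * u n` and `δ (y n * c)` is arbitrarily large, while `δ (y n * c) - y n • δ c` is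
controlled.

Modulo bounded maps, `u ↦ δ (x * u)` is `u ↦ x • δ u`. This makes `J` a two-sided ideal, which the
uniform boundedness principle shows to be closed, so that `A ⧸ J` is a C⋆-algebra. A self-adjoint
element of it with infinite spectrum would lift to `A`, where applying functions with disjoint
supports that do not vanish on the spectrum would give a sequence `y` with no square in `J`. Hence
every self-adjoint element of `A ⧸ J` has finite spectrum, its unit is a finite sum of minimal
projections, and each corner `m (A ⧸ J) n` cut out by two of these has dimension at most one.
-/

open Filter Topology

/-- A quasi-seminorm, with modulus of concavity `C`, on a left module over a normed ring. It is only
submultiplicative in the scalar, which over a normed field already forces homogeneity. -/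
structure IsQuasiSeminorm (R : Type*) {X : Type*} [SeminormedRing R] [AddCommGroup X] [Module R X]
    (C : ℝ) (q : X → ℝ) : Prop where
  one_le : 1 ≤ C
  nonneg (x : X) : 0 ≤ q x
  add_le (x y : X) : q (x + y) ≤ C * (q x + q y)
  smul_le (a : R) (x : X) : q (a • x) ≤ ‖a‖ * q x

/-- A map `f` is bounded, relative to a quasi-seminorm `q` on its codomain, if `q (f u)` is
dominated by a multiple of `‖u‖`. -/
def IsBoundedMap {E X : Type*} [Norm E] (q : X → ℝ) (f : E → X) : Prop :=
  ∃ K : ℝ, 0 ≤ K ∧ ∀ u, q (f u) ≤ K * ‖u‖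

namespace IsQuasiSeminorm

variable {R X : Type*} [SeminormedRing R] [AddCommGroup X] [Module R X] {C : ℝ} {q : X → ℝ}

theorem map_zero (hq : IsQuasiSeminorm R C q) : q 0 = 0 :=
  le_antisymm (by simpa using hq.smul_le 0 0) (hq.nonneg 0)

theorem map_neg_le [NormOneClass R] (hq : IsQuasiSeminorm R C q) (x : X) : q (-x) ≤ q x := by
  simpa using hq.smul_le (-1) x

theorem add_le_of_le (hq : IsQuasiSeminorm R C q) {x y : X} {s t : ℝ} (hx : q x ≤ s)
    (hy : q y ≤ t) : q (x + y) ≤ C * (s + t) :=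
  (hq.add_le x y).trans <|
    mul_le_mul_of_nonneg_left (add_le_add hx hy) (zero_le_one.trans hq.one_le)

theorem restrictScalars (𝕜 : Type*) [NormedField 𝕜] [NormedAlgebra 𝕜 R] [NormOneClass R]
    [Module 𝕜 X] [IsScalarTower 𝕜 R X] (hq : IsQuasiSeminorm R C q) : IsQuasiSeminorm 𝕜 C q where
  one_le := hq.one_le
  nonneg := hq.nonneg
  add_le := hq.add_le
  smul_le c x := by simpa [norm_algebraMap'] using hq.smul_le (algebraMap 𝕜 R c) x

end IsQuasiSeminorm

section BoundedMaps

variable {𝕜 E X : Type*} [NontriviallyNormedField 𝕜] [NormedAddCommGroup E] [NormedSpace 𝕜 E]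
  [AddCommGroup X] [Module 𝕜 X] {q : X → ℝ} {C : ℝ}

theorem exists_bound_of_le_on_ball (hq : IsQuasiSeminorm 𝕜 C q) {ε L : ℝ} (hε : 0 < ε)
    (hL : 0 ≤ L) :
    ∃ K : ℝ, 0 ≤ K ∧ ∀ T : E →ₗ[𝕜] X, (∀ u, ‖u‖ < ε → q (T u) ≤ L) → ∀ u, q (T u) ≤ K * ‖u‖ := by
  obtain ⟨c, hc⟩ := NormedField.exists_one_lt_norm 𝕜
  refine ⟨ε⁻¹ * ‖c‖ * L, by positivity, fun T hT u => ?_⟩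
  rcases eq_or_ne u 0 with rfl | hu
  · simp [hq.map_zero]
  obtain ⟨d, hd, hdu, -, hd_inv⟩ := rescale_to_shell hc hε hu
  calc q (T u) = q (d⁻¹ • T (d • u)) := by rw [map_smul, inv_smul_smul₀ hd]
    _ ≤ ‖d‖⁻¹ * q (T (d • u)) := by simpa using hq.smul_le d⁻¹ (T (d • u))
    _ ≤ (ε⁻¹ * ‖c‖ * ‖u‖) * L := by gcongr; exacts [hq.nonneg _, hT _ hdu]
    _ = ε⁻¹ * ‖c‖ * L * ‖u‖ := by ring

theorem exists_lt_of_not_isBoundedMap (hq : IsQuasiSeminorm 𝕜 C q) {T : E →ₗ[𝕜] X}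
    (hT : ¬IsBoundedMap q T) {ε L : ℝ} (hε : 0 < ε) (hL : 0 ≤ L) : ∃ u, ‖u‖ < ε ∧ L < q (T u) := by
  by_contra! hsmall
  obtain ⟨K, hK, hbound⟩ := exists_bound_of_le_on_ball (E := E) hq hε hL
  exact hT ⟨K, hK, hbound T hsmall⟩

theorem IsBoundedMap.le_of_mem_closure (hq : IsQuasiSeminorm 𝕜 C q) {T : E →ₗ[𝕜] X}
    (hT : IsBoundedMap q T) {s : Set E} {L : ℝ} (hs : ∀ u ∈ s, q (T u) ≤ L) {u : E}
    (hu : u ∈ closure s) : q (T u) ≤ C * (1 + L) := by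
  obtain ⟨K, hK, hbound⟩ := hT
  obtain ⟨v, hv, huv⟩ := Metric.mem_closure_iff.1 hu (1 / (K + 1)) (by positivity)
  have hnear : q (T (u - v)) ≤ 1 := calc
    q (T (u - v)) ≤ K * ‖u - v‖ := hbound _
    _ ≤ (K + 1) * (1 / (K + 1)) := by
      rw [← dist_eq_norm]
      gcongr
      linarith
    _ = 1 := by field_simp
  simpa using hq.add_le_of_le hnear (hs v hv)

theorem exists_uniform_bound [CompleteSpace E] (hq : IsQuasiSeminorm 𝕜 C q) {ι : Type*}
    {T : ι → E →ₗ[𝕜] X} (hT : ∀ i, IsBoundedMap q (T i))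
    (hpointwise : ∀ u, ∃ L : ℝ, ∀ i, q (T i u) ≤ L) :
    ∃ K : ℝ, 0 ≤ K ∧ ∀ i u, q (T i u) ≤ K * ‖u‖ := by
  let S (N : ℕ) : Set E := {u | ∀ i, q (T i u) ≤ N}
  -- As `q` need not be continuous, `S N` need not be closed; Baire is applied to its closure.
  have hcover : ⋃ N, closure (S N) = Set.univ := by
    refine Set.eq_univ_of_forall fun u => ?_
    obtain ⟨L, hL⟩ := hpointwise u
    obtain ⟨N, hN⟩ := exists_nat_ge L
    exact Set.mem_iUnion.2 ⟨N, subset_closure fun i => (hL i).trans hN⟩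
  obtain ⟨N, u₀, hu₀⟩ := nonempty_interior_of_iUnion_of_closed (fun _ => isClosed_closure) hcover
  obtain ⟨ε, hε, hball⟩ := Metric.isOpen_iff.1 isOpen_interior u₀ hu₀
  have hclosure (u : E) (hu : u ∈ interior (closure (S N))) (i : ι) : q (T i u) ≤ C * (1 + N) :=
    (hT i).le_of_mem_closure hq (s := S N) (fun v hv => hv i) (interior_subset hu)
  have hsmall (i : ι) (u : E) (hu : ‖u‖ < ε) :
      q (T i u) ≤ C * (C * (1 + N) + C * (1 + N)) := by
    have hnear := hclosure (u + u₀) (hball (by simpa using hu)) i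
    have hcenter := (hq.map_neg_le _).trans (hclosure u₀ hu₀ i)
    simpa using hq.add_le_of_le hnear hcenter
  have := zero_le_one.trans hq.one_le
  obtain ⟨K, hK, hbound⟩ := exists_bound_of_le_on_ball (E := E) hq hε
    (show 0 ≤ C * (C * (1 + N) + C * (1 + N)) by positivity)
  exact ⟨K, hK, fun i => hbound (T i) (hsmall i)⟩

end BoundedMaps

section BoundedMultipliers

variable {𝕜 A E X : Type*} [NontriviallyNormedField 𝕜] [NormedRing A] [NormedAlgebra 𝕜 A]
  [NormedAddCommGroup E] [NormedSpace 𝕜 E] [AddCommGroup X] [Module 𝕜 X] [Module A X]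
  [IsScalarTower 𝕜 A X] {q : X → ℝ} {C : ℝ}

/-- The `A`-submodule of bounded maps in the space of all linear maps from `E` to `X`. -/
def boundedMaps (hq : IsQuasiSeminorm A C q) : Submodule A (E →ₗ[𝕜] X) where
  carrier := {T | IsBoundedMap q T}
  zero_mem' := ⟨0, le_rfl, by simp [hq.map_zero]⟩
  add_mem' := by
    rintro S T ⟨K, hK, hS⟩ ⟨L, hL, hT⟩
    have := zero_le_one.trans hq.one_le
    exact ⟨C * (K + L), by positivity, fun u => by
      simpa [mul_assoc, add_mul] using hq.add_le_of_le (hS u) (hT u)⟩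
  smul_mem' := by
    rintro a T ⟨K, hK, hT⟩
    refine ⟨‖a‖ * K, by positivity, fun u => (hq.smul_le a (T u)).trans ?_⟩
    rw [mul_assoc]
    gcongr
    exact hT u

/-- The left ideal of all `x` for which the map `u ↦ x • T u` is bounded. -/
def boundedMultipliers (hq : IsQuasiSeminorm A C q) (T : E →ₗ[𝕜] X) : Ideal A :=
  (boundedMaps hq).comap (LinearMap.toSpanSingleton A (E →ₗ[𝕜] X) T)

theorem isClosed_boundedMultipliers [NormOneClass A] [CompleteSpace E]
    (hq : IsQuasiSeminorm A C q) (T : E →ₗ[𝕜] X) :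
    IsClosed (boundedMultipliers hq T : Set A) := by
  refine isClosed_of_closure_subset fun x hx => ?_
  obtain ⟨s, hs, hlim⟩ := mem_closure_iff_seq_limit.1 hx
  obtain ⟨M, hM⟩ := hlim.norm.bddAbove_range
  have hpointwise (u : E) : ∃ L, ∀ n, q ((s n • T) u) ≤ L :=
    ⟨M * q (T u), fun n => (hq.smul_le (s n) (T u)).trans <|
      mul_le_mul_of_nonneg_right (hM ⟨n, rfl⟩) (hq.nonneg _)⟩
  obtain ⟨K, hK, hbound⟩ := exists_uniform_bound (hq.restrictScalars 𝕜) hs hpointwise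
  have := zero_le_one.trans hq.one_le
  refine ⟨C * K, by positivity, fun u => ?_⟩
  have happrox (n : ℕ) : q (x • T u) ≤ C * (‖x - s n‖ * q (T u) + K * ‖u‖) := by
    simpa [← add_smul] using hq.add_le_of_le (hq.smul_le (x - s n) (T u)) (hbound n u)
  have hlim' : Tendsto (fun n => C * (‖x - s n‖ * q (T u) + K * ‖u‖)) atTop
      (𝓝 (C * (‖x - x‖ * q (T u) + K * ‖u‖))) :=
    (((tendsto_const_nhds.sub hlim).norm.mul_const _).add_const _).const_mul C
  simpa [mul_assoc] using ge_of_tendsto' hlim' happrox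

/-- A linear map `δ` is left intertwining if each map `b ↦ δ (a * b) - a • δ b` is bounded. For a
derivation into a bimodule, this map is `b ↦ δ a • b`. -/
def IsLeftIntertwining (q : X → ℝ) (δ : A →ₗ[𝕜] X) : Prop :=
  ∀ a : A, IsBoundedMap q fun b => δ (a * b) - a • δ b

namespace IsLeftIntertwining

variable {δ : A →ₗ[𝕜] X}

theorem mem_boundedMultipliers_iff (hδ : IsLeftIntertwining q δ) (hq : IsQuasiSeminorm A C q)
    {x : A} : x ∈ boundedMultipliers hq δ ↔ IsBoundedMap q fun u => δ (x * u) := by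
  have hdefect : δ ∘ₗ LinearMap.mulLeft 𝕜 x - x • δ ∈ boundedMaps hq := hδ x
  change x • δ ∈ boundedMaps hq ↔ δ ∘ₗ LinearMap.mulLeft 𝕜 x ∈ boundedMaps hq
  rw [← Submodule.add_mem_iff_right _ hdefect, sub_add_cancel]

theorem isTwoSided_boundedMultipliers (hδ : IsLeftIntertwining q δ)
    (hq : IsQuasiSeminorm A C q) : (boundedMultipliers hq δ).IsTwoSided where
  mul_mem_of_left {x} a hx := by
    rw [hδ.mem_boundedMultipliers_iff] at hx ⊢
    obtain ⟨K, hK, hbound⟩ := hx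
    refine ⟨K * ‖a‖, by positivity, fun u => ?_⟩
    calc q (δ (x * a * u)) = q (δ (x * (a * u))) := by rw [mul_assoc]
      _ ≤ K * ‖a * u‖ := hbound _
      _ ≤ K * (‖a‖ * ‖u‖) := by gcongr; exact norm_mul_le a u
      _ = K * ‖a‖ * ‖u‖ := by ring

theorem exists_mul_self_mem_boundedMultipliers [NormOneClass A] [CompleteSpace A]
    (hδ : IsLeftIntertwining q δ) (hq : IsQuasiSeminorm A C q) {y : ℕ → A}
    (hy : Pairwise fun i j => y i * y j = 0) : ∃ n, y n * y n ∈ boundedMultipliers hq δ := by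
  by_contra! hunbounded
  simp only [hδ.mem_boundedMultipliers_iff hq] at hunbounded
  choose K hK hdefect using fun n => hδ (y n)
  have hC : 0 ≤ C := zero_le_one.trans hq.one_le
  have hhump (n : ℕ) : ∃ u, ‖u‖ < (1 / 2) ^ n / (1 + ‖y n‖) ∧
      C * (K n * 2 + ‖y n‖ * n) < q (δ (y n * y n * u)) :=
    exists_lt_of_not_isBoundedMap (T := δ ∘ₗ LinearMap.mulLeft 𝕜 (y n * y n))
      (hq.restrictScalars 𝕜) (hunbounded n) (by positivity)
      (by have := hK n; positivity)
  choose u hu hlarge using hhump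
  have hterm (n : ℕ) : ‖y n * u n‖ ≤ (1 / 2) ^ n := calc
    ‖y n * u n‖ ≤ (1 + ‖y n‖) * ((1 / 2) ^ n / (1 + ‖y n‖)) :=
      (norm_mul_le _ _).trans (by gcongr; exacts [by linarith, (hu n).le])
    _ = (1 / 2) ^ n := by field_simp
  have hsummable : Summable fun n => y n * u n :=
    .of_norm_bounded summable_geometric_two hterm
  set c : A := ∑' n, y n * u n with hc
  have hc_norm : ‖c‖ ≤ 2 := tsum_of_norm_bounded hasSum_geometric_two hterm
  have hyc (n : ℕ) : y n * c = y n * y n * u n := by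
    rw [hc, ← hsummable.tsum_mul_left, tsum_eq_single n, mul_assoc]
    intro m hm
    rw [← mul_assoc, hy hm.symm, zero_mul]
  obtain ⟨n, hn⟩ := exists_nat_ge (q (δ c))
  refine (hlarge n).not_ge ?_
  calc q (δ (y n * y n * u n)) = q ((δ (y n * c) - y n • δ c) + y n • δ c) := by
        rw [sub_add_cancel, hyc]
    _ ≤ C * (K n * ‖c‖ + ‖y n‖ * q (δ c)) := hq.add_le_of_le (hdefect n c) (hq.smul_le _ _)
    _ ≤ C * (K n * 2 + ‖y n‖ * n) := by gcongr; exact hK n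

end IsLeftIntertwining

end BoundedMultipliers

section QuotientCStarAlgebra

variable {A : Type*} [CStarAlgebra A]

theorem exists_continuous_one_sub_mul_bounds {δ : ℝ} (hδ : 0 < δ) :
    ∃ g : ℝ → ℝ, Continuous g ∧
      ∀ t, 0 ≤ t → 0 ≤ 1 - g t * t ∧ 1 - g t * t ≤ 1 ∧ (1 - g t * t) * t ≤ δ := by
  refine ⟨fun t => (max t δ)⁻¹, (continuous_id.max continuous_const).inv₀ fun t =>
    (hδ.trans_le (le_max_right _ _)).ne', fun t ht => ?_⟩
  rcases le_total δ t with h | h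
  · simp [max_eq_left h, inv_mul_cancel₀ (hδ.trans_le h).ne', hδ.le]
  · have hle : δ⁻¹ * t ≤ 1 := inv_mul_le_one_of_le₀ h hδ.le
    have hnonneg : 0 ≤ δ⁻¹ * t := by positivity
    simp only [max_eq_right h]
    refine ⟨by linarith, by linarith, ?_⟩
    nlinarith

/-- Here `1 - r` plays the role of an element of an approximate unit for the left ideal generated by
`star x * x`. -/
theorem exists_isSelfAdjoint_norm_mul_le (x : A) {ε : ℝ} (hε : 0 < ε) :
    ∃ r : A, IsSelfAdjoint r ∧ ‖r‖ ≤ 1 ∧ ‖x * r‖ ≤ ε ∧ 1 - r ∈ Ideal.span {star x * x} := by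
  obtain ⟨g, hg, hbounds⟩ := exists_continuous_one_sub_mul_bounds (pow_pos hε 2)
  set a := star x * x with ha
  have ha_sa : IsSelfAdjoint a := .star_mul_self x
  have hspec (t : ℝ) (ht : t ∈ spectrum ℝ a) := hbounds t (spectrum_star_mul_self_nonneg t ht)
  set f : ℝ → ℝ := fun t => 1 - g t * t with hf_def
  have : Continuous f := by fun_prop
  have hf_sa : IsSelfAdjoint (cfc f a) := cfc_predicate f a
  have hf_eq : cfc f a = 1 - cfc g a * a := by
    rw [hf_def, cfc_sub (fun _ => 1) (fun t => g t * t) a, cfc_const_one ℝ a,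
      cfc_mul g (fun t => t) a, cfc_id' ℝ a]
  have hsq : star (x * cfc f a) * (x * cfc f a) = cfc (fun t => f t * t * f t) a := by
    rw [cfc_mul (fun t => f t * t) f a (by fun_prop) (by fun_prop),
      cfc_mul f (fun t => t) a (by fun_prop) (by fun_prop), cfc_id' ℝ a, star_mul, hf_sa.star_eq]
    simp only [ha, mul_assoc]
  refine ⟨cfc f a, hf_sa, norm_cfc_le zero_le_one fun t ht => ?_, ?_, ?_⟩
  · rw [Real.norm_of_nonneg (hspec t ht).1]
    exact (hspec t ht).2.1
  · rw [← pow_le_pow_iff_left₀ (norm_nonneg _) hε.le two_ne_zero, sq,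
      ← CStarRing.norm_star_mul_self, hsq]
    refine norm_cfc_le (by positivity) fun t ht => ?_
    obtain ⟨h0, h1, h2⟩ := hspec t ht
    have ht0 := spectrum_star_mul_self_nonneg t ht
    rw [Real.norm_of_nonneg (mul_nonneg (mul_nonneg h0 ht0) h0)]
    exact (mul_le_of_le_one_right (mul_nonneg h0 ht0) h1).trans h2
  · rw [hf_eq, sub_sub_cancel]
    exact Ideal.mul_mem_left _ _ (Ideal.subset_span rfl)

theorem mem_of_star_mul_self_mem {J : Ideal A} (hJ : IsClosed (J : Set A)) {x : A}
    (hx : star x * x ∈ J) : x ∈ J := by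
  refine hJ.closure_subset (Metric.mem_closure_iff.2 fun ε hε => ?_)
  obtain ⟨r, -, -, hxr, hr⟩ := exists_isSelfAdjoint_norm_mul_le x (half_pos hε)
  refine ⟨x * (1 - r), J.mul_mem_left x (Ideal.span_le.2 (by simpa using hx) hr), ?_⟩
  rw [dist_eq_norm, mul_sub, mul_one, sub_sub_cancel]
  linarith

theorem norm_mk_mul_norm_mk_le (J : Ideal A) (x : A) :
    ‖(Submodule.Quotient.mk x : A ⧸ J)‖ * ‖(Submodule.Quotient.mk x : A ⧸ J)‖ ≤
      ‖(Submodule.Quotient.mk (star x * x) : A ⧸ J)‖ := by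
  refine le_of_forall_pos_lt_add fun ε hε => ?_
  obtain ⟨y, hy, hynorm⟩ := Submodule.Quotient.norm_mk_lt
    (Submodule.Quotient.mk (star x * x) : A ⧸ J) (half_pos hε)
  obtain ⟨r, hr_sa, hr_norm, hr_small, hr⟩ :=
    exists_isSelfAdjoint_norm_mul_le (star x * x - y) (half_pos hε)
  have hj : star x * x - y ∈ J := (Submodule.Quotient.eq J).1 hy.symm
  have hr_mem : 1 - r ∈ J :=
    Ideal.span_le.2 (Set.singleton_subset_iff.2 (J.mul_mem_left _ hj)) hr
  have hmk : (Submodule.Quotient.mk x : A ⧸ J) = Submodule.Quotient.mk (x * r) := by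
    rw [Submodule.Quotient.eq, ← mul_one_sub]
    exact J.mul_mem_left x hr_mem
  have hcut (z : A) : ‖r * z‖ ≤ ‖z‖ :=
    (norm_mul_le r z).trans (mul_le_of_le_one_left (norm_nonneg z) hr_norm)
  have hcut' (z : A) : ‖z * r‖ ≤ ‖z‖ :=
    (norm_mul_le z r).trans (mul_le_of_le_one_right (norm_nonneg z) hr_norm)
  calc ‖(Submodule.Quotient.mk x : A ⧸ J)‖ * ‖(Submodule.Quotient.mk x : A ⧸ J)‖
      ≤ ‖x * r‖ * ‖x * r‖ := by
        rw [hmk]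
        gcongr <;> exact Submodule.Quotient.norm_mk_le J _
    _ = ‖r * ((star x * x - y) * r + y * r)‖ := by
        rw [← CStarRing.norm_star_mul_self, star_mul, hr_sa.star_eq]
        simp only [← add_mul, sub_add_cancel, mul_assoc]
    _ ≤ ‖(star x * x - y) * r‖ + ‖y * r‖ := (hcut _).trans (norm_add_le _ _)
    _ ≤ ε / 2 + ‖y‖ := add_le_add hr_small (hcut' y)
    _ < ‖(Submodule.Quotient.mk (star x * x) : A ⧸ J)‖ + ε := by linarith

variable (J : Ideal A) [J.IsTwoSided] [hJ : IsClosed (J : Set A)]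

variable {J} in
theorem star_mem_of_isClosed {x : A} (hx : x ∈ J) : star x ∈ J :=
  mem_of_star_mul_self_mem hJ (by rw [star_star]; exact J.mul_mem_right _ hx)

/-- The quotient norm on a quotient by a closed two-sided ideal. -/
noncomputable abbrev quotientNormedRing : NormedRing (A ⧸ J) where
  __ := Submodule.Quotient.normedAddCommGroup J
  __ := Ideal.Quotient.ring J
  dist_eq := dist_eq_norm_neg_add
  norm_mul_le x y := le_mul_of_forall_lt₀ fun s hs t ht => by
    obtain ⟨a, rfl, ha⟩ := Submodule.Quotient.norm_mk_lt x (sub_pos.2 hs)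
    obtain ⟨b, rfl, hb⟩ := Submodule.Quotient.norm_mk_lt y (sub_pos.2 ht)
    calc ‖(Submodule.Quotient.mk (a * b) : A ⧸ J)‖ ≤ ‖a * b‖ := Submodule.Quotient.norm_mk_le J _
      _ ≤ ‖a‖ * ‖b‖ := norm_mul_le a b
      _ ≤ s * t := mul_le_mul (by linarith) (by linarith) (norm_nonneg b)
        ((norm_nonneg _).trans hs.le)

/-- The involution induced on a quotient by a closed two-sided ideal. -/
abbrev quotientStarRing : StarRing (A ⧸ J) :=
  let starHom : A ⧸ J →+ A ⧸ J := QuotientAddGroup.map _ _ (starAddEquiv : A ≃+ A).toAddMonoidHom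
    fun _ hx => star_mem_of_isClosed hx
  { star := starHom
    star_involutive := by
      rintro ⟨x⟩
      exact congrArg (Ideal.Quotient.mk J) (star_star x)
    star_mul := by
      rintro ⟨x⟩ ⟨y⟩
      exact congrArg (Ideal.Quotient.mk J) (star_mul x y)
    star_add := map_add starHom }

/-- The quotient of a C⋆-algebra by a closed two-sided ideal. -/
noncomputable abbrev quotientCStarAlgebra : CStarAlgebra (A ⧸ J) where
  __ := quotientNormedRing J
  __ := quotientStarRing J
  __ := Submodule.Quotient.completeSpace J
  __ := Ideal.Quotient.algebra ℂ
  __ := Submodule.Quotient.normedSpace J ℂ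
  norm_mul_self_le := by
    rintro ⟨x⟩
    exact norm_mk_mul_norm_mk_le J x
  star_smul := by
    rintro c ⟨x⟩
    exact congrArg (Ideal.Quotient.mk J) (star_smul c x)

end QuotientCStarAlgebra

section FiniteSpectrum

theorem mem_spectrum_of_mul_eq_smul {R B : Type*} [CommRing R] [Ring B] [Algebra R B] {a x : B}
    {r : R} (hax : a * x = r • x) (hx : x ≠ 0) : r ∈ spectrum R a := by
  refine spectrum.mem_iff.2 fun hunit => hx (hunit.mul_right_eq_zero.1 ?_)
  rw [sub_mul, hax, Algebra.smul_def, sub_self]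

variable {B : Type*} [CStarAlgebra B]

theorem exists_isSelfAdjoint_infinite_spectrum {e : ℕ → B} (he : ∀ n, IsStarProjection (e n))
    (he_ne : ∀ n, e n ≠ 0) (horth : Pairwise fun i j => e i * e j = 0) :
    ∃ h : B, IsSelfAdjoint h ∧ (spectrum ℝ h).Infinite := by
  have hterm (n : ℕ) : ‖(1 / 2 : ℝ) ^ n • e n‖ ≤ (1 / 2) ^ n := by
    rw [norm_smul, Real.norm_of_nonneg (by positivity)]
    exact mul_le_of_le_one_right (by positivity) ((he n).norm_le (e n))
  have hsummable : Summable fun n => (1 / 2 : ℝ) ^ n • e n :=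
    .of_norm_bounded summable_geometric_two hterm
  have heigen (k : ℕ) : (∑' n, (1 / 2 : ℝ) ^ n • e n) * e k = (1 / 2 : ℝ) ^ k • e k := by
    rw [← hsummable.tsum_mul_right, tsum_eq_single k, smul_mul_assoc, (he k).isIdempotentElem.eq]
    intro n hn
    rw [smul_mul_assoc, horth hn, smul_zero]
  refine ⟨∑' n, (1 / 2 : ℝ) ^ n • e n, ?_, ?_⟩
  · rw [IsSelfAdjoint, tsum_star]
    exact tsum_congr fun n => by rw [star_smul, star_trivial, (he n).isSelfAdjoint.star_eq]
  · refine Set.infinite_of_injective_forall_mem (f := fun k : ℕ => (1 / 2 : ℝ) ^ k) ?_ fun k =>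
      mem_spectrum_of_mul_eq_smul (heigen k) (he_ne k)
    exact pow_right_injective₀ (by norm_num) (by norm_num)

theorem exists_isStarProjection_mul_eq_smul {b : B} (hb : IsSelfAdjoint b)
    (hfin : (spectrum ℝ b).Finite) {t : ℝ} (ht : t ∈ spectrum ℝ b) :
    ∃ p : B, IsStarProjection p ∧ p ≠ 0 ∧ b * p = t • p := by
  have hcont (f : ℝ → ℝ) : ContinuousOn f (spectrum ℝ b) := hfin.continuousOn f
  set χ : ℝ → ℝ := Pi.single t 1 with hχ
  refine ⟨cfc χ b, ⟨?_, cfc_predicate χ b⟩, fun hzero => ?_, ?_⟩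
  · rw [IsIdempotentElem, ← cfc_mul χ χ b (hcont _) (hcont _)]
    refine cfc_congr fun s _ => ?_
    rcases eq_or_ne s t with rfl | hs <;> simp [*]
  · rw [← cfc_zero ℝ b, cfc_eq_cfc_iff_eqOn hb (hcont _) (hcont _)] at hzero
    simpa [hχ] using hzero ht
  · calc b * cfc χ b = cfc (fun s => s * χ s) b := by
          rw [cfc_mul (fun s => s) χ b (hcont _) (hcont _), cfc_id' ℝ b]
      _ = cfc (fun s => t * χ s) b := cfc_congr fun s _ => by
          rcases eq_or_ne s t with rfl | hs <;> simp [*]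
      _ = t • cfc χ b := cfc_const_mul t χ b (hcont _)

variable [PartialOrder B]

/-- A star projection is minimal if it is minimal among the nonzero star projections, for the order
of the C⋆-algebra. -/
def IsMinimalStarProjection (m : B) : Prop :=
  Minimal (fun p : B => IsStarProjection p ∧ p ≠ 0) m

theorem IsMinimalStarProjection.isStarProjection {m : B} (hm : IsMinimalStarProjection m) :
    IsStarProjection m :=
  hm.prop.1

variable [StarOrderedRing B]

theorem isWF_setOf_isStarProjection
    (hfin : ∀ b : B, IsSelfAdjoint b → (spectrum ℝ b).Finite) :
    {p : B | IsStarProjection p}.IsWF := by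
  refine Set.isWF_iff_no_descending_seq.2 fun f hf hproj => ?_
  have hmul {i j : ℕ} (hij : i ≤ j) : f j * f i = f j ∧ f i * f j = f j :=
    ⟨((hproj j).le_iff_mul_eq_left (hproj i)).1 (hf.antitone hij),
      ((hproj j).le_iff_mul_eq_right (hproj i)).1 (hf.antitone hij)⟩
  have hdiff (n : ℕ) : IsStarProjection (f n - f (n + 1)) :=
    ((hproj (n + 1)).le_iff_sub (hproj n)).1 (hf.antitone n.le_succ)
  have horth : Pairwise fun i j => (f i - f (i + 1)) * (f j - f (j + 1)) = 0 := by
    intro i j hij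
    rcases hij.lt_or_gt with h | h
    · simp [sub_mul, mul_sub, (hmul h.le).2, (hmul (h.le.trans j.le_succ)).2, (hmul h).2,
        (hmul (Nat.succ_le_succ h.le)).2]
    · simp [sub_mul, mul_sub, (hmul h.le).1, (hmul (h.le.trans i.le_succ)).1, (hmul h).1,
        (hmul (Nat.succ_le_succ h.le)).1]
  obtain ⟨h, hsa, hinf⟩ := exists_isSelfAdjoint_infinite_spectrum hdiff
    (fun n => sub_ne_zero.2 (hf n.lt_succ_self).ne') horth
  exact hinf (hfin h hsa)

theorem mem_closure_isMinimalStarProjection (hwf : {p : B | IsStarProjection p}.IsWF) {e : B}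
    (he : IsStarProjection e) : e ∈ AddSubmonoid.closure {m : B | IsMinimalStarProjection m} := by
  refine Set.WellFoundedOn.induction hwf he fun p hp ih => ?_
  rcases eq_or_ne p 0 with rfl | hp_ne
  · exact zero_mem _
  by_cases hmin : IsMinimalStarProjection p
  · exact AddSubmonoid.subset_closure hmin
  obtain ⟨s, hs_lt, hs, hs_ne⟩ := (not_minimal_iff_exists_lt ⟨hp, hp_ne⟩).1 hmin
  have hdiff : IsStarProjection (p - s) := (hs.le_iff_sub hp).1 hs_lt.le
  have hdiff_lt : p - s < p := sub_lt_self p (hs.nonneg.lt_of_ne' hs_ne)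
  simpa using add_mem (ih (p - s) hdiff hdiff_lt) (ih s hs hs_lt)

namespace IsMinimalStarProjection

variable {m n : B}

theorem eq_smul_of_mul_eq (hm : IsMinimalStarProjection m) {b : B} (hb : IsSelfAdjoint b)
    (hfin : (spectrum ℝ b).Finite) (hmb : m * b = b) : ∃ t : ℝ, b = t • m := by
  by_cases hzero : spectrum ℝ b ⊆ {0}
  · exact ⟨0, by rw [CFC.eq_zero_of_spectrum_subset_zero b hzero, zero_smul]⟩
  obtain ⟨t, ht, ht_ne⟩ := Set.not_subset.1 hzero
  obtain ⟨p, hp, hp_ne, hbp⟩ := exists_isStarProjection_mul_eq_smul hb hfin ht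
  have hmp : m * p = p := by
    rw [← smul_right_inj ht_ne, ← mul_smul_comm, ← hbp, ← mul_assoc, hmb]
  obtain rfl : p = m :=
    hm.eq_of_le ⟨hp, hp_ne⟩ ((hp.le_iff_mul_eq_right hm.isStarProjection).2 hmp)
  refine ⟨t, ?_⟩
  calc b = star (p * b) := by rw [hmb, hb.star_eq]
    _ = b * p := by rw [star_mul, hb.star_eq, hp.isSelfAdjoint.star_eq]
    _ = t • p := hbp

theorem exists_mul_mul_eq_smul (hm : IsMinimalStarProjection m)
    (hfin : ∀ b : B, IsSelfAdjoint b → (spectrum ℝ b).Finite) (x : B) :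
    ∃ c : ℂ, m * x * m = c • m := by
  have hreal (b : B) (hb : IsSelfAdjoint b) : ∃ t : ℝ, m * b * m = t • m := by
    have hsa : IsSelfAdjoint (m * b * m) := by
      simpa [hm.isStarProjection.isSelfAdjoint.star_eq] using hb.conjugate m
    refine hm.eq_smul_of_mul_eq hsa (hfin _ hsa) ?_
    simp only [← mul_assoc, hm.isStarProjection.isIdempotentElem.eq]
  obtain ⟨s, hs⟩ := hreal (realPart x) (realPart x).2
  obtain ⟨t, ht⟩ := hreal (imaginaryPart x) (imaginaryPart x).2
  refine ⟨s + Complex.I * t, ?_⟩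
  conv_lhs => rw [← realPart_add_I_smul_imaginaryPart x]
  rw [mul_add, add_mul, mul_smul_comm, smul_mul_assoc, hs, ht, add_smul, mul_smul, Complex.coe_smul,
    Complex.coe_smul]

theorem exists_forall_mul_mul_eq_smul (hm : IsMinimalStarProjection m)
    (hn : IsMinimalStarProjection n)
    (hfin : ∀ b : B, IsSelfAdjoint b → (spectrum ℝ b).Finite) :
    ∃ v : B, ∀ x : B, ∃ c : ℂ, m * x * n = c • v := by
  by_cases hall : ∀ x, m * x * n = 0
  · exact ⟨0, fun x => ⟨0, by simp [hall]⟩⟩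
  obtain ⟨x₀, hx₀⟩ := not_forall.1 hall
  set v := m * x₀ * n with hv
  have hv_star : star v = n * star x₀ * m := by
    simp [hv, hm.isStarProjection.isSelfAdjoint.star_eq, hn.isStarProjection.isSelfAdjoint.star_eq,
      mul_assoc]
  have hmm := hm.isStarProjection.isIdempotentElem.eq
  have hnn := hn.isStarProjection.isIdempotentElem.eq
  obtain ⟨c, hc⟩ : ∃ c : ℂ, star v * v = c • n := by
    obtain ⟨c, hc⟩ := hn.exists_mul_mul_eq_smul hfin (star x₀ * m * (m * x₀))
    exact ⟨c, by rw [← hc, hv_star, hv]; simp only [mul_assoc]⟩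
  have hc_ne : c ≠ 0 := by
    rintro rfl
    exact hx₀ ((CStarRing.star_mul_self_eq_zero_iff v).1 (by rw [hc, zero_smul]))
  refine ⟨v, fun x => ?_⟩
  obtain ⟨d, hd⟩ := hm.exists_mul_mul_eq_smul hfin (x * n * (n * star x₀))
  refine ⟨c⁻¹ * d, ?_⟩
  rw [mul_smul, eq_inv_smul_iff₀ hc_ne]
  calc c • (m * x * n) = m * x * n * (star v * v) := by
        rw [hc, mul_smul_comm, mul_assoc (m * x), hnn]
    _ = m * (x * n * (n * star x₀)) * m * v := by rw [hv_star]; simp only [mul_assoc]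
    _ = d • v := by rw [hd, smul_mul_assoc, hv, ← mul_assoc, ← mul_assoc, hmm]

theorem hasFiniteRange_mulLeftRight (hm : IsMinimalStarProjection m)
    (hn : IsMinimalStarProjection n)
    (hfin : ∀ b : B, IsSelfAdjoint b → (spectrum ℝ b).Finite) :
    (LinearMap.mulLeftRight ℂ (m, n)).HasFiniteRange := by
  obtain ⟨v, hv⟩ := hm.exists_forall_mul_mul_eq_smul hn hfin
  have hle : (LinearMap.mulLeftRight ℂ (m, n)).range ≤ ℂ ∙ v := ?_
  · exact LinearMap.hasFiniteRange_iff_range.2 <| Module.Finite.iff_fg.1 <|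
      Submodule.finiteDimensional_of_le hle
  rintro _ ⟨x, rfl⟩
  obtain ⟨c, hc⟩ := hv x
  exact Submodule.mem_span_singleton.2 ⟨c, hc.symm⟩

end IsMinimalStarProjection

theorem finiteDimensional_of_finite_spectrum {B : Type*} [CStarAlgebra B]
    (hfin : ∀ b : B, IsSelfAdjoint b → (spectrum ℝ b).Finite) : FiniteDimensional ℂ B := by
  let _ := CStarAlgebra.spectralOrder B
  have := CStarAlgebra.spectralOrderedRing B
  have hone : (1 : B) ∈ AddSubmonoid.closure {m : B | IsMinimalStarProjection m} :=
    mem_closure_isMinimalStarProjection (isWF_setOf_isStarProjection hfin) (.one B)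
  have hrange : (LinearMap.mulLeftRight ℂ ((1 : B), (1 : B))).HasFiniteRange := by
    refine AddSubmonoid.closure_induction₂
      (motive := fun e f _ _ => (LinearMap.mulLeftRight ℂ (e, f)).HasFiniteRange)
      (fun m n hm hn => hm.hasFiniteRange_mulLeftRight hn hfin) (fun f _ => ?_) (fun e _ => ?_)
      (fun e f g _ _ _ he hf => ?_) (fun e f g _ _ _ he hf => ?_) hone hone
    · convert LinearMap.HasFiniteRange.zero using 1
      ext
      simp
    · convert LinearMap.HasFiniteRange.zero using 1
      ext
      simp
    · have hadd : LinearMap.mulLeftRight ℂ (e + f, g) =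
          LinearMap.mulLeftRight ℂ (e, g) + LinearMap.mulLeftRight ℂ (f, g) :=
        LinearMap.ext fun x => by simp [add_mul]
      exact hadd ▸ he.add hf
    · have hadd : LinearMap.mulLeftRight ℂ (g, e + f) =
          LinearMap.mulLeftRight ℂ (g, e) + LinearMap.mulLeftRight ℂ (g, f) :=
        LinearMap.ext fun x => by simp [mul_add]
      exact hadd ▸ he.add hf
  have hid : LinearMap.mulLeftRight ℂ ((1 : B), (1 : B)) = LinearMap.id :=
    LinearMap.ext fun x => by simp
  rw [hid, LinearMap.hasFiniteRange_iff_range, LinearMap.range_id] at hrange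
  exact Module.finite_def.2 hrange

end FiniteSpectrum

section OrthogonalSequences

theorem exists_seq_mem_disjoint_ball {S : Type*} [MetricSpace S] {F : Set S} (hF : F.Infinite) :
    ∃ (t : ℕ → S) (ε : ℕ → ℝ), (∀ n, t n ∈ F) ∧ (∀ n, 0 < ε n) ∧
      Pairwise fun i j => Disjoint (Metric.ball (t i) (ε i)) (Metric.ball (t j) (ε j)) := by
  have := hF.to_subtype
  obtain ⟨U, hU_inf, hU_open, hU_disj⟩ := exists_seq_infinite_isOpen_pairwise_disjoint F
  choose t ht using fun n => (hU_inf n).nonempty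
  choose ε hε hball using fun n => Metric.isOpen_iff.1 (hU_open n) (t n) (ht n)
  have hsep {i j : ℕ} (hij : i ≠ j) : ε i ≤ dist (t i) (t j) := by
    by_contra! hlt
    exact Set.disjoint_left.1 (hU_disj hij) (hball i (Metric.mem_ball'.2 hlt)) (ht j)
  refine ⟨fun n => t n, fun n => ε n / 2, fun n => (t n).2, fun n => half_pos (hε n),
    fun i j hij => Metric.ball_disjoint_ball ?_⟩
  have hji := hsep hij.symm
  rw [dist_comm] at hji
  linarith [hsep hij, Subtype.dist_eq (t i) (t j)]

theorem exists_seq_continuous_mul_eq_zero {S : Type*} [MetricSpace S] {F : Set S}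
    (hF : F.Infinite) :
    ∃ f : ℕ → S → ℝ, (∀ n, Continuous (f n)) ∧ (∀ n, ∃ t ∈ F, f n t ≠ 0) ∧
      Pairwise fun i j => ∀ s, f i s * f j s = 0 := by
  obtain ⟨t, ε, ht, hε, hdisj⟩ := exists_seq_mem_disjoint_ball hF
  refine ⟨fun n s => max 0 (ε n - dist s (t n)), fun n => by fun_prop,
    fun n => ⟨t n, ht n, by simpa using hε n⟩, fun i j hij s => ?_⟩
  beta_reduce
  have hzero {n : ℕ} (hs : s ∉ Metric.ball (t n) (ε n)) : max 0 (ε n - dist s (t n)) = 0 :=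
    max_eq_left (sub_nonpos.2 (not_lt.1 hs))
  by_cases hs : s ∈ Metric.ball (t i) (ε i)
  · rw [hzero (Set.disjoint_left.1 (hdisj hij) hs), mul_zero]
  · rw [hzero hs, zero_mul]

theorem exists_isSelfAdjoint_map_eq {A B : Type*} [Ring A] [StarRing A] [Algebra ℂ A]
    [StarModule ℂ A] [Ring B] [StarRing B] [Algebra ℂ B] {π : A →⋆ₐ[ℂ] B}
    (hπ : Function.Surjective π) {b : B} (hb : IsSelfAdjoint b) :
    ∃ a : A, IsSelfAdjoint a ∧ π a = b := by
  obtain ⟨a, rfl⟩ := hπ b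
  refine ⟨realPart a, (realPart a).2, ?_⟩
  rw [realPart_apply_coe, ← Complex.coe_smul, map_smul, map_add, map_star, hb.star_eq, ← two_smul ℂ,
    smul_smul]
  norm_num

variable {A B : Type*} [CStarAlgebra A] [CStarAlgebra B]

open scoped CStarAlgebra in
theorem finite_spectrum_of_surjective {π : A →⋆ₐ[ℂ] B} (hπ : Function.Surjective π)
    (hker : ∀ y : ℕ → A, (Pairwise fun i j => y i * y j = 0) → ∃ n, π (y n * y n) = 0) {b : B}
    (hb : IsSelfAdjoint b) : (spectrum ℝ b).Finite := by
  by_contra hinf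
  obtain ⟨f, hf, hne, horth⟩ := exists_seq_continuous_mul_eq_zero hinf
  obtain ⟨a, ha, rfl⟩ := exists_isSelfAdjoint_map_eq hπ hb
  have hmul (i j : ℕ) : cfc (f i) a * cfc (f j) a = cfc (fun s => f i s * f j s) a :=
    (cfc_mul (f i) (f j) a (hf i).continuousOn (hf j).continuousOn).symm
  obtain ⟨n, hn⟩ := hker (fun n => cfc (f n) a) fun i j hij =>
    (hmul i j).trans (by rw [funext (horth hij), cfc_const_zero])
  have hcont : Continuous fun s => f n s * f n s := (hf n).mul (hf n)
  rw [hmul, π.map_cfc _ a hcont.continuousOn (map_continuous π), ← cfc_const_zero ℝ (π a),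
    cfc_eq_cfc_iff_eqOn hb hcont.continuousOn continuousOn_const] at hn
  obtain ⟨t, ht, hft⟩ := hne n
  exact hft (mul_self_eq_zero.1 (hn ht))

theorem finiteDimensional_quotient_of_exists_mul_self_mem (J : Ideal A) [J.IsTwoSided]
    [IsClosed (J : Set A)]
    (hJ : ∀ y : ℕ → A, (Pairwise fun i j => y i * y j = 0) → ∃ n, y n * y n ∈ J) :
    FiniteDimensional ℂ (A ⧸ J) := by
  let _ := quotientCStarAlgebra J
  let π : A →⋆ₐ[ℂ] A ⧸ J := { Ideal.Quotient.mkₐ ℂ J with map_star' := fun _ => rfl }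
  refine finiteDimensional_of_finite_spectrum fun b =>
    finite_spectrum_of_surjective (π := π) Ideal.Quotient.mk_surjective fun y hy => ?_
  obtain ⟨n, hn⟩ := hJ y hy
  exact ⟨n, Ideal.Quotient.eq_zero_iff_mem.2 hn⟩

end OrthogonalSequences

section Bimodule

theorem norm_one_le_one {A : Type*} [NormedRing A] [StarRing A] [CStarRing A] : ‖(1 : A)‖ ≤ 1 := by
  rcases subsingleton_or_nontrivial A with hA | hA
  · simp [Subsingleton.elim (1 : A) 0]
  · exact CStarRing.norm_one.le

variable {A X : Type*} [NormedRing A] [AddCommGroup X] [Module A X] [Module Aᵐᵒᵖ X] {q : X → ℝ}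
  {C : ℝ}

theorem isQuasiSeminorm_of_bimodule (hA : ‖(1 : A)‖ ≤ 1) (hC : 1 ≤ C) (hq_nonneg : ∀ x, 0 ≤ q x)
    (hq_add : ∀ x y, q (x + y) ≤ C * (q x + q y))
    (hq_mod : ∀ (a b : A) (x : X), q (a • (op b • x)) ≤ ‖a‖ * ‖b‖ * q x) :
    IsQuasiSeminorm A C q where
  one_le := hC
  nonneg := hq_nonneg
  add_le := hq_add
  smul_le a x := calc
    q (a • x) ≤ ‖a‖ * ‖(1 : A)‖ * q x := by simpa using hq_mod a 1 x
    _ ≤ ‖a‖ * q x := by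
      gcongr
      exacts [hq_nonneg x, mul_le_of_le_one_right (norm_nonneg a) hA]

theorem isLeftIntertwining_of_derivation {𝕜 : Type*} [NontriviallyNormedField 𝕜]
    [NormedAlgebra 𝕜 A] [Module 𝕜 X] (hq_nonneg : ∀ x, 0 ≤ q x)
    (hq_mod : ∀ (a b : A) (x : X), q (a • (op b • x)) ≤ ‖a‖ * ‖b‖ * q x) {δ : A →ₗ[𝕜] X}
    (hδ : ∀ a b : A, δ (a * b) = op b • δ a + a • δ b) : IsLeftIntertwining q δ := fun a =>
  ⟨‖(1 : A)‖ * q (δ a), mul_nonneg (norm_nonneg _) (hq_nonneg _), fun b => calc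
    q (δ (a * b) - a • δ b) = q ((1 : A) • op b • δ a) := by rw [hδ, add_sub_cancel_right, one_smul]
    _ ≤ ‖(1 : A)‖ * ‖b‖ * q (δ a) := hq_mod 1 b (δ a)
    _ = ‖(1 : A)‖ * q (δ a) * ‖b‖ := by ring⟩

end Bimodule

theorem quotient_by_continuity_ideal_finiteDimensional_general {A X : Type*} [CStarAlgebra A]
    [AddCommGroup X] [Module ℂ X] [Module A X] [IsScalarTower ℂ A X] {q : X → ℝ} {C : ℝ}
    (hq : IsQuasiSeminorm A C q) {δ : A →ₗ[ℂ] X} (hδ : IsLeftIntertwining q δ) :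
    ∃ V : Submodule ℂ A, (V : Set A) = {x | IsBoundedMap q fun u => δ (x * u)} ∧
      FiniteDimensional ℂ (A ⧸ V) := by
  refine ⟨(boundedMultipliers hq δ).restrictScalars ℂ,
    Set.ext fun x => hδ.mem_boundedMultipliers_iff hq, ?_⟩
  suffices FiniteDimensional ℂ (A ⧸ boundedMultipliers hq δ) from
    Module.Finite.equiv (Submodule.Quotient.restrictScalarsEquiv ℂ (boundedMultipliers hq δ)).symm
  nontriviality A
  have := hδ.isTwoSided_boundedMultipliers hq
  have := isClosed_boundedMultipliers hq δ
  exact finiteDimensional_quotient_of_exists_mul_self_mem _ fun y hy =>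
    hδ.exists_mul_self_mem_boundedMultipliers hq hy

theorem quotient_by_continuity_ideal_finiteDimensional
    (A X : Type*) [NormedRing A] [StarRing A] [CStarRing A]
    [NormedAlgebra ℂ A] [CompleteSpace A] [StarModule ℂ A]
    [AddCommGroup X] [Module ℂ X]
    [Module A X] [Module Aᵐᵒᵖ X] [SMulCommClass A Aᵐᵒᵖ X]
    [IsScalarTower ℂ A X] [IsScalarTower ℂ Aᵐᵒᵖ X]
    (q : X → ℝ) (C : ℝ) (hC : 1 ≤ C)
    (hq_nonneg : ∀ x : X, 0 ≤ q x)
    (hq_def : ∀ x : X, q x = 0 ↔ x = 0)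
    (hq_smul : ∀ (α : ℂ) (x : X), q (α • x) = ‖α‖ * q x)
    (hq_add : ∀ x y : X, q (x + y) ≤ C * (q x + q y))
    (hq_mod : ∀ (a b : A) (x : X), q (a • (op b • x)) ≤ ‖a‖ * ‖b‖ * q x)
    (δ : A →ₗ[ℂ] X)
    (hδ : ∀ a b : A, δ (a * b) = op b • δ a + a • δ b)
    (J : Set A)
    (hJ : J = {x : A | ∃ K : ℝ, 0 ≤ K ∧ ∀ u : A, q (δ (x * u)) ≤ K * ‖u‖}) :
    ∃ V : Submodule ℂ A, (V : Set A) = J ∧ FiniteDimensional ℂ (A ⧸ V) := by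
  let _ : CStarAlgebra A := {}
  exact hJ ▸ quotient_by_continuity_ideal_finiteDimensional_general
    (isQuasiSeminorm_of_bimodule norm_one_le_one hC hq_nonneg hq_add hq_mod)
    (isLeftIntertwining_of_derivation hq_nonneg hq_mod hδ)
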